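/- Let f ∈ A₁(c), set t = f′(c₁) and s = f′(c₂), and assume s > t > 0. Let Z = 2t·(1 − √(t/s))/(c₂−c₁), which is the unique solution of 4t³/((2t − Z(c₂−c₁))²) = s with Z(c₂−c₁) < 2t, and note Z > 0. Then for every x ∈ (−1, c₁): f(x) ≤ c₃ + (4t³/Z)·( 1/(2t + Z(c₁−x)) − 1/(2t) ). -/

import Mathlib

open Set Complex

noncomputable section

/-- The doubly-slit plane `ℂ(J)` for `J ⊆ ℝ`. -/
def CSlit (J : Set ℝ) : Set ℂ := {z : ℂ | z.im ≠ 0 ∨ z.re ∈ J}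

/-- `ℂ₁ = ℂ((−1,1))`. -/
def C1 : Set ℂ := CSlit (Set.Ioo (-1 : ℝ) 1)

/-- The class `A₁(c)` of normalized Herglotz functions. -/
structure MemA1 (c₁ c₂ c₃ c₄ : ℝ) (f : ℂ → ℂ) : Prop where
  holo : DifferentiableOn ℂ f C1
  maps : Set.MapsTo f C1 C1
  symm : ∀ z ∈ C1, f (starRingEnd ℂ z) = starRingEnd ℂ (f z)
  upper : ∀ z ∈ C1, 0 < z.im → 0 ≤ (f z).im
  lower : ∀ z ∈ C1, z.im < 0 → (f z).im ≤ 0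
  val1 : f (c₁ : ℂ) = (c₃ : ℂ)
  val2 : f (c₂ : ℂ) = (c₄ : ℂ)

lemma sp_strict (F : ℂ → ℂ) (hF : DifferentiableOn ℂ F {z | 0 < z.im})
    (hp : ∀ z : ℂ, 0 < z.im → 0 < (F z).im) (z w : ℂ) (hz : 0 < z.im) (hw : 0 < w.im) :
    normSq (F z - starRingEnd ℂ (F w)) * (z.im * w.im) ≤
      normSq (z - starRingEnd ℂ w) * ((F z).im * (F w).im) := by
  have key : ∀ a b : ℂ, normSq (a - starRingEnd ℂ b) = normSq (a - b) + 4 * (a.im * b.im) := by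
    intro a b
    simp [normSq_apply]; ring
  have hne : ∀ a b : ℂ, 0 < a.im → 0 < b.im → a - starRingEnd ℂ b ≠ 0 := by
    intro a b ha hb h
    have := congrArg Complex.im h
    simp at this
    linarith
  have hlt : ∀ a b : ℂ, 0 < a.im → 0 < b.im → ‖(a - b) / (a - starRingEnd ℂ b)‖ < 1 := by
    intro a b ha hb
    rw [norm_div, div_lt_one (norm_pos_iff.2 (hne a b ha hb))]
    have h2 := key a b
    rw [normSq_eq_norm_sq, normSq_eq_norm_sq] at h2
    have : 0 < a.im * b.im := mul_pos ha hb
    exact lt_of_pow_lt_pow_left₀ 2 (norm_nonneg _) (by linarith)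
  set φ : ℂ → ℂ := fun u => (w - starRingEnd ℂ w * u) / (1 - u) with hφ
  have h1u : ∀ u ∈ Metric.ball (0:ℂ) 1, (1 - u) ≠ 0 := by
    intro u hu h
    have : u = 1 := by linear_combination -h
    subst this
    simp at hu
  have hφim : ∀ u ∈ Metric.ball (0:ℂ) 1, 0 < (φ u).im := by
    intro u hu
    have h1 := h1u u hu
    have hpos := normSq_pos.2 h1
    have e : (φ u).im = w.im * (1 - normSq u) / normSq (1 - u) := by
      simp only [hφ, div_im]
      field_simp
      simp [normSq_apply]
      ring
    rw [e]
    have : normSq u < 1 := by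
      rw [normSq_eq_norm_sq]
      have : ‖u‖ < 1 := by simpa using hu
      nlinarith [norm_nonneg u]
    exact div_pos (mul_pos hw (by linarith)) hpos
  set G : ℂ → ℂ := fun u => (F (φ u) - F w) / (F (φ u) - starRingEnd ℂ (F w)) with hG
  have hφd : DifferentiableOn ℂ φ (Metric.ball 0 1) := by
    apply DifferentiableOn.div _ _ h1u <;> fun_prop
  have hFφ : DifferentiableOn ℂ (fun u => F (φ u)) (Metric.ball 0 1) :=
    hF.comp hφd (fun u hu => hφim u hu)
  have hGd : DifferentiableOn ℂ G (Metric.ball 0 1) := by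
    apply DifferentiableOn.div (hFφ.sub_const _) (hFφ.sub_const _)
    intro u hu
    exact hne _ _ (hp _ (hφim u hu)) (hp _ hw)
  have hφ0 : φ 0 = w := by simp [hφ]
  have hG0 : G 0 = 0 := by simp [hG, hφ0]
  set u := (z - w) / (z - starRingEnd ℂ w) with hu
  have hub : ‖u‖ < 1 := hlt z w hz hw
  have hφu : φ u = z := by
    have h1 := h1u u (by simpa using hub)
    have h2 := hne z w hz hw
    simp only [hφ]
    rw [div_eq_iff h1, hu]
    field_simp
    ring
  have hle : ‖G u‖ ≤ ‖u‖ := by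
    refine Complex.norm_le_norm_of_mapsTo_ball hGd (R := 1) ?_ hG0 hub
    intro v hv
    rw [mem_closedBall_zero_iff]
    exact (hlt _ _ (hp _ (hφim v hv)) (hp _ hw)).le
  have hGu : G u = (F z - F w) / (F z - starRingEnd ℂ (F w)) := by simp only [hG, hφu]
  rw [hGu, hu, norm_div, norm_div] at hle
  have p1 := norm_pos_iff.2 (hne z w hz hw)
  have p2 := norm_pos_iff.2 (hne _ _ (hp z hz) (hp w hw))
  rw [div_le_div_iff₀ p2 p1] at hle
  have hsq := pow_le_pow_left₀ (by positivity) hle 2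
  rw [mul_pow, mul_pow, ← normSq_eq_norm_sq, ← normSq_eq_norm_sq, ← normSq_eq_norm_sq,
    ← normSq_eq_norm_sq] at hsq
  have k1 := key z w
  have k2 := key (F z) (F w)
  rw [k1, k2] at hsq ⊢
  linarith

lemma sp (F : ℂ → ℂ) (hF : DifferentiableOn ℂ F {z | 0 < z.im})
    (hp : ∀ z : ℂ, 0 < z.im → 0 ≤ (F z).im) (z w : ℂ) (hz : 0 < z.im) (hw : 0 < w.im) :
    normSq (F z - starRingEnd ℂ (F w)) * (z.im * w.im) ≤
      normSq (z - starRingEnd ℂ w) * ((F z).im * (F w).im) := by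
  have h : ∀ d ∈ Ioi (0:ℝ),
    normSq ((F z + d * z) - starRingEnd ℂ (F w + d * w)) * (z.im * w.im) ≤
      normSq (z - starRingEnd ℂ w) * ((F z + d * z).im * (F w + d * w).im) := by
    intro d hd
    refine sp_strict (fun z => F z + d * z) (hF.add (by fun_prop)) ?_ z w hz hw
    intro v hv
    have := hp v hv
    have : 0 < d * v.im := mul_pos hd hv
    simp
    linarith
  have h0 := ContinuousWithinAt.closure_le (s := Ioi (0:ℝ)) (x := 0)
    (f := fun d : ℝ => normSq ((F z + d * z) - starRingEnd ℂ (F w + d * w)) * (z.im * w.im))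
    (g := fun d : ℝ => normSq (z - starRingEnd ℂ w) * ((F z + d * z).im * (F w + d * w).im))
    (by simp) (Continuous.continuousWithinAt (by
      have := continuous_normSq
      have := Complex.continuous_conj
      fun_prop)) (Continuous.continuousWithinAt (by
      have := Complex.continuous_im
      fun_prop)) h
  simpa using h0

lemma C1_isOpen : IsOpen C1 := by
  have : C1 = {z : ℂ | z.im ≠ 0} ∪ Complex.re ⁻¹' (Set.Ioo (-1 : ℝ) 1) := rfl
  rw [this]
  exact (isOpen_ne_fun Complex.continuous_im continuous_const).union
    (isOpen_Ioo.preimage Complex.continuous_re)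

section
variable {c₁ c₂ c₃ c₄ : ℝ} {f : ℂ → ℂ}

lemma mem_C1_of_real {x : ℝ} (hx : x ∈ Ioo (-1:ℝ) 1) : (x : ℂ) ∈ C1 := Or.inr (by simpa using hx)

lemma im_real (hf : MemA1 c₁ c₂ c₃ c₄ f) {x : ℝ} (hx : x ∈ Ioo (-1:ℝ) 1) : (f x).im = 0 := by
  have h := hf.symm x (mem_C1_of_real hx)
  rw [conj_ofReal] at h
  exact conj_eq_iff_im.1 h.symm

lemma hasDeriv_c (hf : MemA1 c₁ c₂ c₃ c₄ f) {x : ℝ} (hx : x ∈ Ioo (-1:ℝ) 1) :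
    HasDerivAt f (deriv f x) x :=
  (hf.holo.differentiableAt (C1_isOpen.mem_nhds (mem_C1_of_real hx))).hasDerivAt

lemma hasDeriv_r (hf : MemA1 c₁ c₂ c₃ c₄ f) {x : ℝ} (hx : x ∈ Ioo (-1:ℝ) 1) :
    HasDerivAt (fun y : ℝ => (f y).re) (deriv f x).re x :=
  (hasDeriv_c hf hx).real_of_complex

open Filter Topology

lemma vert (x e : ℝ) : ((x : ℂ) + e * I).im = e := by simp

lemma vert_path (x : ℝ) : HasDerivAt (fun e : ℝ => (x : ℂ) + e * I) I 0 := by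
  have h : HasDerivAt (fun e : ℝ => (e : ℂ)) 1 0 := Complex.ofRealCLM.hasDerivAt
  simpa using (h.mul_const I).const_add (x : ℂ)

lemma tendsto_f (hf : MemA1 c₁ c₂ c₃ c₄ f) {x : ℝ} (hx : x ∈ Ioo (-1:ℝ) 1) :
    Tendsto (fun e : ℝ => f (x + e * I)) (𝓝[>] 0) (𝓝 (f x)) := by
  have h1 : ContinuousAt (fun e : ℝ => f (x + e * I)) 0 := by
    apply ContinuousAt.comp (g := f) _ (vert_path x).continuousAt
    simpa using (hasDeriv_c hf hx).continuousAt
  have := h1.tendsto.mono_left (nhdsWithin_le_nhds (s := Ioi 0))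
  simpa using this

lemma tendsto_im (hf : MemA1 c₁ c₂ c₃ c₄ f) {x : ℝ} (hx : x ∈ Ioo (-1:ℝ) 1) :
    Tendsto (fun e : ℝ => (f (x + e * I)).im / e) (𝓝[>] 0) (𝓝 (deriv f x).re) := by
  have h0 : HasDerivAt f (deriv f x) ((x : ℂ) + (0:ℝ) * I) := by simpa using hasDeriv_c hf hx
  have h1 : HasDerivAt (fun e : ℝ => f (x + e * I)) (deriv f x * I) 0 :=
    h0.comp (0:ℝ) (vert_path x)
  have h2 : HasDerivAt (fun e : ℝ => (f (x + e * I)).im) (deriv f x * I).im 0 :=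
    Complex.imCLM.hasFDerivAt.comp_hasDerivAt (0:ℝ) h1
  have h3 := h2.tendsto_slope.mono_left
    (nhdsWithin_mono (0:ℝ) (fun y (hy : 0 < y) => ne_of_gt hy : Ioi (0:ℝ) ⊆ {0}ᶜ))
  have h4 : (deriv f x * I).im = (deriv f x).re := by simp
  rw [h4] at h3
  refine h3.congr fun e => ?_
  simp [slope_def_field, im_real hf hx]

lemma deriv_nonneg' (hf : MemA1 c₁ c₂ c₃ c₄ f) {x : ℝ} (hx : x ∈ Ioo (-1:ℝ) 1) :
    0 ≤ (deriv f x).re := by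
  refine ge_of_tendsto (tendsto_im hf hx) ?_
  filter_upwards [self_mem_nhdsWithin] with e he
  have he : 0 < e := he
  have : 0 < ((x : ℂ) + e * I).im := by rw [vert]; exact he
  exact div_nonneg (hf.upper _ (Or.inl this.ne') this) he.le

lemma loewner (hf : MemA1 c₁ c₂ c₃ c₄ f) {x y : ℝ} (hx : x ∈ Ioo (-1:ℝ) 1)
    (hy : y ∈ Ioo (-1:ℝ) 1) :
    ((f x).re - (f y).re) ^ 2 ≤ (x - y) ^ 2 * ((deriv f x).re * (deriv f y).re) := by
  have hc := continuous_normSq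
  have hcj := Complex.continuous_conj
  have L : Tendsto (fun e : ℝ => normSq (f (x + e * I) - starRingEnd ℂ (f (y + e * I))))
      (𝓝[>] 0) (𝓝 (normSq (f x - starRingEnd ℂ (f y)))) :=
    (hc.tendsto _).comp ((tendsto_f hf hx).sub ((hcj.tendsto _).comp (tendsto_f hf hy)))
  have R0 : Tendsto (fun e : ℝ => normSq (((x:ℂ) + e * I) - starRingEnd ℂ ((y:ℂ) + e * I)))
      (𝓝[>] 0) (𝓝 (normSq ((x:ℂ) - y))) := by
    have : Continuous (fun e : ℝ => normSq (((x:ℂ) + e * I) - starRingEnd ℂ ((y:ℂ) + e * I))) := by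
      fun_prop
    have := (this.tendsto 0).mono_left (nhdsWithin_le_nhds (s := Ioi 0))
    simpa using this
  have R := R0.mul ((tendsto_im hf hx).mul (tendsto_im hf hy))
  have h := le_of_tendsto_of_tendsto L R ?_
  · have e1 : normSq (f x - starRingEnd ℂ (f y)) = ((f x).re - (f y).re) ^ 2 := by
      simp [normSq_apply, im_real hf hx, im_real hf hy]; ring
    have e2 : normSq ((x:ℂ) - y) = (x - y) ^ 2 := by
      simp [normSq_apply]; ring
    rwa [e1, e2] at h
  · filter_upwards [self_mem_nhdsWithin] with e he
    have he : 0 < e := he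
    have := sp f (hf.holo.mono (fun z (hz : 0 < z.im) => Or.inl hz.ne'))
      (fun z hz => hf.upper z (Or.inl hz.ne') hz) (x + e * I) (y + e * I)
      (by rw [vert]; exact he) (by rw [vert]; exact he)
    rw [vert, vert] at this
    have h2 : 0 < e * e := by positivity
    rw [div_mul_div_comm, ← mul_div_assoc, le_div_iff₀ h2]
    exact this

end

/-- Real-variable core of the argument. -/
lemma mono_core (φ φ' h : ℝ → ℝ) (a b c c₃ t : ℝ) (ht : 0 < t)
    (hd : ∀ y ∈ Ioo a b, HasDerivAt φ (φ' y) y)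
    (hL : ∀ y ∈ Ioo a b, (φ y - c₃) ^ 2 ≤ (y - c) ^ 2 * (φ' y * t))
    (hc : c ∉ Ioo a b) (hne : ∀ y ∈ Ioo a b, φ y ≠ c₃)
    (hcont : ContinuousOn h (Icc a b))
    (hh : ∀ y ∈ Ioo a b, h y = 1 / (t * (y - c)) - 1 / (φ y - c₃)) :
    MonotoneOn h (Icc a b) := by
  have key : ∀ y ∈ Ioo a b,
      HasDerivAt h (-(t * 1) / (t * (y - c)) ^ 2 - -(φ' y) / (φ y - c₃) ^ 2) y := by
    intro y hy
    have hyc : y - c ≠ 0 := fun e => hc (by rwa [← sub_eq_zero.1 e])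
    have n1 : t * (y - c) ≠ 0 := mul_ne_zero ht.ne' hyc
    have n2 : φ y - c₃ ≠ 0 := sub_ne_zero.2 (hne y hy)
    have d1 := ((((hasDerivAt_id y).sub_const c).const_mul t).fun_inv n1)
    have d2 := (((hd y hy).sub_const c₃).fun_inv n2)
    refine (d1.sub d2).congr_of_eventuallyEq ?_
    filter_upwards [isOpen_Ioo.mem_nhds hy] with z hz
    simp [hh z hz]
  apply monotoneOn_of_deriv_nonneg (convex_Icc a b) hcont
  · rw [interior_Icc]
    exact fun y hy => (key y hy).differentiableAt.differentiableWithinAt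
  · rw [interior_Icc]
    intro y hy
    rw [(key y hy).deriv]
    have hyc : y - c ≠ 0 := fun e => hc (by rwa [← sub_eq_zero.1 e])
    have n2 : φ y - c₃ ≠ 0 := sub_ne_zero.2 (hne y hy)
    have p1 : 0 < (y - c) ^ 2 := by positivity
    have p2 : 0 < (φ y - c₃) ^ 2 := by positivity
    have e : -(t * 1) / (t * (y - c)) ^ 2 = - (1 / (t * (y - c) ^ 2)) := by
      field_simp
    rw [e, neg_div]
    have : 1 / (t * (y - c) ^ 2) ≤ φ' y / (φ y - c₃) ^ 2 := by
      rw [div_le_div_iff₀ (by positivity) p2]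
      have := hL y hy
      nlinarith
    linarith

lemma final_alg (t s D Δ d e r Z : ℝ) (ht : 0 < t) (hD : 0 < D) (hΔ : 0 < Δ) (hd : 0 < d)
    (he : 0 < e) (hr : 0 < r) (hr1 : r < 1) (hrs : r ^ 2 * s = t)
    (hZ : Z = 2 * t * (1 - r) / Δ) (hL : D ^ 2 ≤ Δ ^ 2 * (s * t))
    (hm : 1 / e - 1 / (t * d) ≤ 1 / (t * Δ) - 1 / D) :
    -e ≤ (4 * t ^ 3 / Z) * (1 / (2 * t + Z * d) - 1 / (2 * t)) := by
  have hZ0 : 0 < Z := by rw [hZ]; exact div_pos (by nlinarith) hΔ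
  have h1 : r * D ≤ t * Δ := by
    apply le_of_sq_le_sq _ (by positivity)
    have := mul_le_mul_of_nonneg_left hL (sq_nonneg r)
    calc (r * D) ^ 2 = r ^ 2 * D ^ 2 := by ring
      _ ≤ _ := this
      _ = (r ^ 2 * s) * (t * Δ ^ 2) := by ring
      _ = (t * Δ) ^ 2 := by rw [hrs]; ring
  have h2 : r / (t * Δ) ≤ 1 / D := by
    rw [div_le_div_iff₀ (by positivity) hD]; linarith
  have h3 : 1 / e ≤ (2 * t + Z * d) / (2 * t ^ 2 * d) := by
    have : (2 * t + Z * d) / (2 * t ^ 2 * d) = 1 / (t * d) + 1 / (t * Δ) - r / (t * Δ) := by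
      rw [hZ]; field_simp; ring
    rw [this]; linarith
  have hp : 0 < 2 * t + Z * d := by positivity
  rw [div_le_div_iff₀ he (by positivity)] at h3
  have e1 : (4 * t ^ 3 / Z) * (1 / (2 * t + Z * d) - 1 / (2 * t))
      = - (2 * t ^ 2 * d / (2 * t + Z * d)) := by
    field_simp; ring
  rw [e1, neg_le_neg_iff, div_le_iff₀ hp]
  linarith

theorem stmt12 (c₁ c₂ c₃ c₄ : ℝ)
    (h1 : -1 < c₁) (h12 : c₁ < c₂) (h2 : c₂ < 1)
    (h3 : -1 < c₃) (h34 : c₃ < c₄) (h4 : c₄ < 1)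
    (f : ℂ → ℂ) (hf : MemA1 c₁ c₂ c₃ c₄ f)
    (t s Z : ℝ)
    (ht : t = deriv (fun y : ℝ => (f y).re) c₁)
    (hs : s = deriv (fun y : ℝ => (f y).re) c₂)
    (htpos : 0 < t) (hts : t < s)
    (hZ : Z = 2 * t * (1 - Real.sqrt (t / s)) / (c₂ - c₁)) :
    0 < Z ∧
    Z * (c₂ - c₁) < 2 * t ∧
    4 * t ^ 3 / (2 * t - Z * (c₂ - c₁)) ^ 2 = s ∧
    (∀ Z' : ℝ, Z' * (c₂ - c₁) < 2 * t →
      4 * t ^ 3 / (2 * t - Z' * (c₂ - c₁)) ^ 2 = s → Z' = Z) ∧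
    ∀ x ∈ Set.Ioo (-1 : ℝ) c₁,
      (f x).re ≤ c₃ + (4 * t ^ 3 / Z) * (1 / (2 * t + Z * (c₁ - x)) - 1 / (2 * t)) := by
  have hΔ : 0 < c₂ - c₁ := by linarith
  have hs0 : 0 < s := htpos.trans hts
  set r := Real.sqrt (t / s) with hr
  have hr0 : 0 < r := Real.sqrt_pos.2 (div_pos htpos hs0)
  have hr2 : r ^ 2 = t / s := Real.sq_sqrt (div_pos htpos hs0).le
  have hrs : r ^ 2 * s = t := by rw [hr2]; field_simp
  have hr1 : r < 1 := by
    by_contra hcon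
    push Not at hcon
    nlinarith [mul_le_mul hcon hcon (by norm_num) hr0.le]
  have hZΔ : Z * (c₂ - c₁) = 2 * t * (1 - r) := by rw [hZ]; field_simp
  have hZ0 : 0 < Z := by rw [hZ]; exact div_pos (by nlinarith) hΔ
  refine ⟨hZ0, by rw [hZΔ]; nlinarith, ?_, ?_, ?_⟩
  · rw [hZΔ, div_eq_iff (by have : 0 < t * r := by positivity
                            nlinarith), ← hrs]
    ring
  · intro Z' h1' h2'
    have hp : 0 < 2 * t - Z' * (c₂ - c₁) := by linarith
    rw [div_eq_iff (by positivity)] at h2'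
    have h3 : (2 * t - Z' * (c₂ - c₁)) ^ 2 = (2 * t * r) ^ 2 := by
      apply mul_left_cancel₀ hs0.ne'
      rw [mul_comm, mul_comm s, mul_comm, ← h2']
      calc 4 * t ^ 3 = 4 * t ^ 2 * t := by ring
        _ = 4 * t ^ 2 * (r ^ 2 * s) := by rw [hrs]
        _ = _ := by ring
    have h4 := (pow_left_inj₀ hp.le (by positivity) two_ne_zero).1 h3
    apply mul_right_cancel₀ hΔ.ne'
    linarith
  intro x hx
  have m1 : c₁ ∈ Ioo (-1:ℝ) 1 := ⟨h1, by linarith⟩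
  have m2 : c₂ ∈ Ioo (-1:ℝ) 1 := ⟨by linarith, h2⟩
  have mx : x ∈ Ioo (-1:ℝ) 1 := ⟨hx.1, by linarith [hx.2]⟩
  have v1 : (f c₁).re = c₃ := by rw [hf.val1]; simp
  have v2 : (f c₂).re = c₄ := by rw [hf.val2]; simp
  have t' : t = (deriv f c₁).re := by rw [ht]; exact (hasDeriv_r hf m1).deriv
  have s' : s = (deriv f c₂).re := by rw [hs]; exact (hasDeriv_r hf m2).deriv
  set φ : ℝ → ℝ := fun y => (f y).re with hφ
  have hmono : MonotoneOn φ (Ioo (-1) 1) := by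
    apply monotoneOn_of_deriv_nonneg (convex_Ioo _ _)
    · exact fun y hy => (hasDeriv_r hf hy).continuousAt.continuousWithinAt
    · rw [interior_Ioo]
      exact fun y hy => (hasDeriv_r hf hy).differentiableAt.differentiableWithinAt
    · rw [interior_Ioo]
      intro y hy
      rw [(hasDeriv_r hf hy).deriv]
      exact deriv_nonneg' hf hy
  have hne : ∀ y ∈ Ioo (-1:ℝ) 1, y ≠ c₁ → φ y ≠ c₃ := by
    intro y hy hyc heq
    have hd0 : HasDerivAt φ t c₁ := by rw [t']; exact hasDeriv_r hf m1
    have hconst : ∀ z ∈ uIcc y c₁, φ z = c₃ := by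
      intro z hz
      rcases lt_or_gt_of_ne hyc with hlt | hlt
      · rw [uIcc_of_le hlt.le] at hz
        have mz : z ∈ Ioo (-1:ℝ) 1 := ⟨by linarith [hy.1, hz.1], by linarith [m1.2, hz.2]⟩
        have a1 := hmono hy mz hz.1
        have a2 := hmono mz m1 hz.2
        have : φ c₁ = c₃ := v1
        linarith
      · rw [uIcc_of_ge hlt.le] at hz
        have mz : z ∈ Ioo (-1:ℝ) 1 := ⟨by linarith [m1.1, hz.1], by linarith [hy.2, hz.2]⟩
        have a1 := hmono m1 mz hz.1
        have a2 := hmono mz hy hz.2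
        have : φ c₁ = c₃ := v1
        linarith
    have hd1 : HasDerivWithinAt φ 0 (uIcc y c₁) c₁ :=
      (hasDerivWithinAt_const c₁ (uIcc y c₁) c₃).congr hconst v1
    have hu : UniqueDiffWithinAt ℝ (uIcc y c₁) c₁ := by
      refine uniqueDiffOn_Icc ?_ c₁ right_mem_uIcc
      exact min_lt_max.2 hyc
    have : t = 0 := hu.eq_deriv _ hd0.hasDerivWithinAt hd1
    linarith
  set q : ℂ → ℂ := dslope f c₁ with hq
  set p : ℂ → ℂ := dslope q c₁ with hp
  have hnc := C1_isOpen.mem_nhds (mem_C1_of_real m1)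
  have hqd : DifferentiableOn ℂ q C1 := (differentiableOn_dslope hnc).2 hf.holo
  have hpd : DifferentiableOn ℂ p C1 := (differentiableOn_dslope hnc).2 hqd
  have cre : ∀ g : ℂ → ℂ, DifferentiableOn ℂ g C1 →
      ContinuousOn (fun y : ℝ => (g y).re) (Ioo (-1) 1) := by
    intro g hg
    exact Complex.continuous_re.comp_continuousOn
      (hg.continuousOn.comp Complex.continuous_ofReal.continuousOn
        (fun y hy => mem_C1_of_real hy))
  have sl : ∀ (g : ℂ → ℂ) (y : ℝ), y ≠ c₁ →
      (dslope g c₁ y).re = ((g y).re - (g c₁).re) / (y - c₁) := by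
    intro g y hy
    rw [dslope_of_ne _ (by exact_mod_cast hy), slope_def_field, ← ofReal_sub, div_ofReal_re, sub_re]
  have hq1 : (q c₁).re = t := by rw [hq, dslope_same, t']
  have hqy : ∀ y : ℝ, y ≠ c₁ → (q y).re = (φ y - c₃) / (y - c₁) := by
    intro y hy
    rw [hq, sl f y hy, v1]
  have hpy : ∀ y : ℝ, y ≠ c₁ → (p y).re = ((q y).re - t) / (y - c₁) := by
    intro y hy
    rw [hp, sl q y hy, hq1]
  have hq0 : ∀ y ∈ Ioo (-1:ℝ) 1, (q y).re ≠ 0 := by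
    intro y hy
    by_cases h : y = c₁
    · rw [h, hq1]; exact htpos.ne'
    · rw [hqy y h]
      exact div_ne_zero (sub_ne_zero.2 (hne y hy h)) (sub_ne_zero.2 h)
  set h : ℝ → ℝ := fun y => (p y).re / (t * (q y).re) with hh
  have hcont : ContinuousOn h (Ioo (-1) 1) :=
    (cre p hpd).div (continuousOn_const.mul (cre q hqd))
      (fun y hy => mul_ne_zero htpos.ne' (hq0 y hy))
  have hform : ∀ y ∈ Ioo (-1:ℝ) 1, y ≠ c₁ → h y = 1 / (t * (y - c₁)) - 1 / (φ y - c₃) := by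
    intro y hy hyc
    have n1 := sub_ne_zero.2 (hne y hy hyc)
    have n2 := sub_ne_zero.2 hyc
    simp only [hh]
    rw [hpy y hyc, hqy y hyc]
    field_simp
  have hL : ∀ y ∈ Ioo (-1:ℝ) 1, (φ y - c₃) ^ 2 ≤ (y - c₁) ^ 2 * ((deriv f y).re * t) := by
    intro y hy
    have := loewner hf hy m1
    rwa [v1, ← t'] at this
  have gen : ∀ a b : ℝ, a ∈ Ioo (-1:ℝ) 1 → b ∈ Ioo (-1:ℝ) 1 → c₁ ∉ Ioo a b →
      MonotoneOn h (Icc a b) := by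
    intro a b ha hb hab
    have sub1 : Icc a b ⊆ Ioo (-1:ℝ) 1 := fun y hy =>
      ⟨lt_of_lt_of_le ha.1 hy.1, lt_of_le_of_lt hy.2 hb.2⟩
    have sub2 : ∀ y ∈ Ioo a b, y ∈ Ioo (-1:ℝ) 1 := fun y hy => sub1 ⟨hy.1.le, hy.2.le⟩
    have nc : ∀ y ∈ Ioo a b, y ≠ c₁ := fun y hy e => hab (e ▸ hy)
    exact mono_core φ (fun y => (deriv f y).re) h a b c₁ c₃ t htpos
      (fun y hy => hasDeriv_r hf (sub2 y hy)) (fun y hy => hL y (sub2 y hy)) hab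
      (fun y hy => hne y (sub2 y hy) (nc y hy)) (hcont.mono sub1)
      (fun y hy => hform y (sub2 y hy) (nc y hy))
  have g1 := gen x c₁ mx m1 (fun h => lt_irrefl _ h.2) ⟨le_refl _, hx.2.le⟩ ⟨hx.2.le, le_refl _⟩ hx.2.le
  have g2 := gen c₁ c₂ m1 m2 (fun h => lt_irrefl _ h.1) ⟨le_refl _, h12.le⟩ ⟨h12.le, le_refl _⟩ h12.le
  have g3 := g1.trans g2
  rw [hform x mx hx.2.ne, hform c₂ m2 h12.ne'] at g3
  have v2' : φ c₂ = c₄ := v2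
  rw [v2'] at g3
  have he : 0 < c₃ - φ x := by
    have a := hmono mx m1 hx.2.le
    have b := hne x mx hx.2.ne
    have : φ c₁ = c₃ := v1
    have := lt_of_le_of_ne (a.trans this.le) b
    linarith
  have hL2 := hL c₂ m2
  rw [v2', ← s'] at hL2
  have fin := final_alg t s (c₄ - c₃) (c₂ - c₁) (c₁ - x) (c₃ - φ x) r Z htpos (by linarith) hΔ
    (by linarith [hx.2]) he hr0 hr1 hrs hZ hL2 (by
      have e1 : 1 / (t * (x - c₁)) = - (1 / (t * (c₁ - x))) := by
        rw [← neg_sub c₁ x, mul_neg, one_div_neg_eq_neg_one_div]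
      have e2 : 1 / (φ x - c₃) = - (1 / (c₃ - φ x)) := by
        rw [← neg_sub c₃ (φ x), one_div_neg_eq_neg_one_div]
      rw [e1, e2] at g3
      linarith)
  change φ x ≤ _
  linarith
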